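/- Let L be a finite-dimensional Lie algebra over a field of characteristic different from 2 and 3. Then the cover of L is unique up to Lie algebra isomorphism: if 0 → M₁ → C₁ → L → 0 and 0 → M₂ → C₂ → L → 0 are maximal stem extensions of L, then C₁ ≅ C₂ as Lie algebras. -/

import Mathlib

universe u

/-- A stem extension of the Lie algebra `L` over the field `K`:
a surjective Lie algebra homomorphism `γ : T → L` whose kernel is contained in
the center of `T` and in the derived subalgebra `[T,T]`. -/
structure StemExtension (K L : Type u) [Field K] [LieRing L] [LieAlgebra K L] where
  T : Type u
  [instLieRing : LieRing T]
  [instLieAlgebra : LieAlgebra K T]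
  γ : T →ₗ⁅K⁆ L
  surj : Function.Surjective γ
  central : γ.ker ≤ LieAlgebra.center K T
  stem : γ.ker ≤ LieAlgebra.derivedSeries K T 1

attribute [instance] StemExtension.instLieRing StemExtension.instLieAlgebra

/-!
Let `P` be the fibre product of two maximal stem extensions `E₁` and `E₂` over `L`. A subalgebra `H`
of `P` that maps onto `L` and meets the kernel of `P → L` only inside `[P, P]` is itself a stem
extension of `L`, because `[H, H] = [P, P]`: brackets in a central extension depend only on the
images in `L`. For the same reason every homomorphism over `L` into a stem extension is surjective,
in particular both projections `H → E₁` and `H → E₂`. By maximality the kernel of `H → L` is no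
larger than those of `E₁` and `E₂`, so both projections are isomorphisms.
-/

open Function LieAlgebra

section CentralKernel

variable {R L S T : Type*} [CommRing R] [LieRing L] [LieAlgebra R L] [LieRing S] [LieAlgebra R S]
  [LieRing T] [LieAlgebra R T]

theorem derivedSeries_one_toSubmodule_le_iff {N : Submodule R T} :
    (derivedSeries R T 1).toSubmodule ≤ N ↔ ∀ x y : T, ⁅x, y⁆ ∈ N := by
  have hspan : (derivedSeries R T 1).toSubmodule = Submodule.span R {⁅x, y⁆ | (x : T) (y : T)} :=
    coe_derivedSeries_one_eq R T
  rw [hspan, Submodule.span_le]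
  exact ⟨fun h x y => h ⟨x, y, rfl⟩, by rintro h _ ⟨x, y, rfl⟩; exact h x y⟩

theorem lie_mem_derivedSeries_one (x y : T) : ⁅x, y⁆ ∈ derivedSeries R T 1 :=
  derivedSeries_one_toSubmodule_le_iff.1 le_rfl x y

theorem lie_eq_lie_of_map_eq {g : T →ₗ⁅R⁆ L} (hg : g.ker ≤ center R T) {x x' y y' : T}
    (hx : g x = g x') (hy : g y = g y') : ⁅x, y⁆ = ⁅x', y'⁆ := by
  have lie_sub_eq_zero {a b : T} (hab : g a = g b) (z : T) : ⁅z, a - b⁆ = 0 :=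
    hg (g.mem_ker.2 (by rw [map_sub, hab, sub_self])) z
  calc ⁅x, y⁆ = ⁅x, y'⁆ := by rw [← sub_eq_zero, ← lie_sub, lie_sub_eq_zero hy]
    _ = ⁅x', y'⁆ := by
      rw [← sub_eq_zero, ← sub_lie, ← lie_skew, lie_sub_eq_zero hx, neg_zero]

theorem derivedSeries_one_le_map_of_surjective_comp {g : T →ₗ⁅R⁆ L} (hg : g.ker ≤ center R T)
    {θ : S →ₗ⁅R⁆ T} (hθ : Surjective (g.comp θ)) :
    (derivedSeries R T 1).toSubmodule ≤
      (derivedSeries R S 1).toSubmodule.map (θ : S →ₗ[R] T) := by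
  refine derivedSeries_one_toSubmodule_le_iff.2 fun x y => ?_
  obtain ⟨a, ha⟩ := hθ (g x)
  obtain ⟨b, hb⟩ := hθ (g y)
  exact ⟨⁅a, b⁆, lie_mem_derivedSeries_one a b,
    (θ.map_lie a b).trans (lie_eq_lie_of_map_eq hg ha hb)⟩

theorem surjective_of_surjective_comp_of_ker_le {g : T →ₗ⁅R⁆ L} (hg : g.ker ≤ center R T)
    (hg' : g.ker ≤ derivedSeries R T 1) {θ : S →ₗ⁅R⁆ T} (hθ : Surjective (g.comp θ)) :
    Surjective θ := by
  intro z
  obtain ⟨a, ha⟩ := hθ (g z)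
  have hz : z - θ a ∈ g.ker := g.mem_ker.2 (by rw [map_sub, ← ha, LieHom.comp_apply, sub_self])
  obtain ⟨b, -, hb : θ b = z - θ a⟩ := derivedSeries_one_le_map_of_surjective_comp hg hθ (hg' hz)
  exact ⟨b + a, by rw [map_add, hb, sub_add_cancel]⟩

theorem derivedSeries_one_fg_of_ker_le_center [Module.Finite R L] {g : T →ₗ⁅R⁆ L}
    (hs : Surjective g) (hg : g.ker ≤ center R T) : (derivedSeries R T 1).toSubmodule.FG := by
  obtain ⟨n, p, hp⟩ := Module.Finite.exists_fin' R L
  obtain ⟨σ, hσ⟩ := Module.projective_lifting_property (g : T →ₗ[R] L) p hs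
  have exists_map_eq (x : T) : ∃ a, g (σ a) = g x :=
    (hp (g x)).imp fun a ha => (LinearMap.congr_fun hσ a).trans ha
  let bracket : T →ₗ[R] T →ₗ[R] T := (LieModule.toEnd R T T : T →ₗ[R] Module.End R T)
  have hbracket : (derivedSeries R T 1).toSubmodule =
      Submodule.map₂ bracket (LinearMap.range σ) (LinearMap.range σ) := by
    refine le_antisymm (derivedSeries_one_toSubmodule_le_iff.2 fun x y => ?_)
      (Submodule.map₂_le.2 fun x _ y _ => lie_mem_derivedSeries_one x y)
    obtain ⟨a, ha⟩ := exists_map_eq x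
    obtain ⟨b, hb⟩ := exists_map_eq y
    rw [← lie_eq_lie_of_map_eq hg ha hb]
    exact Submodule.apply_mem_map₂ bracket (LinearMap.mem_range_self σ a)
      (LinearMap.mem_range_self σ b)
  have hrange : (LinearMap.range σ).FG := Module.Finite.iff_fg.1 inferInstance
  exact hbracket ▸ hrange.map₂ bracket hrange

end CentralKernel

section FiberProduct

variable {R L T₁ T₂ : Type*} [CommRing R] [LieRing L] [LieAlgebra R L] [LieRing T₁]
  [LieAlgebra R T₁] [LieRing T₂] [LieAlgebra R T₂]

/-- The fibre product `T₁ ×_L T₂` of two Lie algebra homomorphisms `g₁ : T₁ → L` and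
`g₂ : T₂ → L`, as a subalgebra of the product. -/
def lieFiberProduct (g₁ : T₁ →ₗ⁅R⁆ L) (g₂ : T₂ →ₗ⁅R⁆ L) : LieSubalgebra R (T₁ × T₂) where
  __ := LinearMap.eqLocus (g₁.comp (LieHom.fst R T₁ T₂) : T₁ × T₂ →ₗ[R] L)
    (g₂.comp (LieHom.snd R T₁ T₂) : T₁ × T₂ →ₗ[R] L)
  lie_mem' {x y} (hx : g₁ x.1 = g₂ x.2) (hy : g₁ y.1 = g₂ y.2) := by
    change g₁ ⁅x.1, y.1⁆ = g₂ ⁅x.2, y.2⁆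
    rw [LieHom.map_lie, LieHom.map_lie, hx, hy]

namespace lieFiberProduct

variable (g₁ : T₁ →ₗ⁅R⁆ L) (g₂ : T₂ →ₗ⁅R⁆ L)

/-- The first projection of the fibre product. -/
def fst : lieFiberProduct g₁ g₂ →ₗ⁅R⁆ T₁ := (LieHom.fst R T₁ T₂).comp (lieFiberProduct g₁ g₂).incl

/-- The second projection of the fibre product. -/
def snd : lieFiberProduct g₁ g₂ →ₗ⁅R⁆ T₂ := (LieHom.snd R T₁ T₂).comp (lieFiberProduct g₁ g₂).incl

theorem comp_fst_eq_comp_snd : g₁.comp (fst g₁ g₂) = g₂.comp (snd g₁ g₂) :=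
  LieHom.ext fun x => x.2

variable {g₁ g₂}

theorem surjective_comp_fst (h₁ : Surjective g₁) (h₂ : Surjective g₂) :
    Surjective (g₁.comp (fst g₁ g₂)) := by
  intro y
  obtain ⟨a, ha⟩ := h₁ y
  obtain ⟨b, hb⟩ := h₂ y
  exact ⟨⟨(a, b), ha.trans hb.symm⟩, ha⟩

theorem ker_comp_fst_le_center (h₁ : g₁.ker ≤ center R T₁) (h₂ : g₂.ker ≤ center R T₂) :
    (g₁.comp (fst g₁ g₂)).ker ≤ center R (lieFiberProduct g₁ g₂) := by
  intro z (hz₁ : g₁ z.1.1 = 0) x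
  have hz₂ : g₂ z.1.2 = 0 := z.2.symm.trans hz₁
  exact Subtype.ext (Prod.ext (h₁ hz₁ x.1.1) (h₂ hz₂ x.1.2))

end lieFiberProduct

end FiberProduct

theorem exists_lieSubalgebra_codisjoint_inf_le_derivedSeries {K P : Type*} [Field K] [LieRing P]
    [LieAlgebra K P] (N : Submodule K P) :
    ∃ H : LieSubalgebra K P, Codisjoint H.toSubmodule N ∧
      H.toSubmodule ⊓ N ≤ (derivedSeries K P 1).toSubmodule := by
  set D := (derivedSeries K P 1).toSubmodule
  obtain ⟨H, hinf, hcod⟩ :=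
    IsModularLattice.exists_inf_eq_and_codisjoint (le_sup_left : D ≤ D ⊔ N)
  have hDH : D ≤ H := hinf.ge.trans inf_le_right
  refine ⟨{ H with lie_mem' := fun {x y} _ _ => hDH (lie_mem_derivedSeries_one x y) }, ?_, ?_⟩
  · change Codisjoint H N
    rwa [codisjoint_iff, ← sup_eq_right.2 hDH, sup_right_comm, ← codisjoint_iff]
  · change H ⊓ N ≤ D
    calc H ⊓ N ≤ (D ⊔ N) ⊓ H := le_inf (inf_le_right.trans le_sup_right) inf_le_left
      _ = D := hinf

theorem injective_of_surjective_of_rank_comap_le {K : Type*} [DivisionRing K] {V W : Type u}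
    [AddCommGroup V] [Module K V] [AddCommGroup W] [Module K W] {f : V →ₗ[K] W}
    (hf : Surjective f) (q : Submodule K W) [FiniteDimensional K q]
    (h : Module.rank K (q.comap f) ≤ Module.rank K q) : Injective f := by
  obtain ⟨i, hi⟩ := rank_le_iff_exists_linearMap.1 h
  have hinj : Injective (f.submoduleComap q) :=
    OrzechProperty.injective_of_surjective_of_injective i _ hi
      (f.submoduleComap_surjective_of_surjective q hf)
  refine (injective_iff_map_eq_zero f).2 fun x hx => ?_
  have hxq : x ∈ q.comap f := by rw [Submodule.mem_comap, hx]; exact q.zero_mem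
  exact congrArg Subtype.val ((injective_iff_map_eq_zero _).1 hinj ⟨x, hxq⟩ (Subtype.ext hx))

namespace StemExtension

variable {K L : Type u} [Field K] [LieRing L] [LieAlgebra K L]

/-- A stem extension is maximal if its kernel has the largest dimension among all stem extensions
of `L`; its middle term is then a cover of `L`. -/
def IsMaximal (E : StemExtension K L) : Prop :=
  ∀ E' : StemExtension K L, Module.rank K E'.γ.ker ≤ Module.rank K E.γ.ker

theorem finiteDimensional_ker [FiniteDimensional K L] (E : StemExtension K L) :
    FiniteDimensional K E.γ.ker :=
  Module.Finite.iff_fg.2 ((derivedSeries_one_fg_of_ker_le_center E.surj E.central).of_le E.stem)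

theorem exists_lieHom_of_ker_le_center {P : Type u} [LieRing P] [LieAlgebra K P]
    {π : P →ₗ⁅K⁆ L} (hs : Surjective π) (hπ : π.ker ≤ center K P) :
    ∃ (E : StemExtension K L) (ι : E.T →ₗ⁅K⁆ P), π.comp ι = E.γ := by
  obtain ⟨H, hcod, hinf⟩ :=
    exists_lieSubalgebra_codisjoint_inf_le_derivedSeries π.ker.toSubmodule
  have hsurj : Surjective (π.comp H.incl) := by
    intro y
    obtain ⟨x, rfl⟩ := hs y
    obtain ⟨h, hh, n, hn, rfl⟩ := Submodule.mem_sup.1 (hcod.eq_top ▸ Submodule.mem_top (x := x))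
    have hn0 : π n = 0 := hn
    exact ⟨⟨h, hh⟩, by simp [hn0]⟩
  have hcentral : (π.comp H.incl).ker ≤ center K H := fun z hz x => Subtype.ext (hπ hz x)
  have hstem : (π.comp H.incl).ker ≤ derivedSeries K H 1 := by
    intro z hz
    obtain ⟨w, hw, hwz⟩ := derivedSeries_one_le_map_of_surjective_comp hπ hsurj (hinf ⟨z.2, hz⟩)
    exact (Subtype.ext hwz : w = z) ▸ hw
  exact ⟨⟨H, π.comp H.incl, hsurj, hcentral, hstem⟩, H.incl, rfl⟩

theorem exists_common_lieHom (E₁ E₂ : StemExtension K L) :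
    ∃ (E : StemExtension K L) (θ₁ : E.T →ₗ⁅K⁆ E₁.T) (θ₂ : E.T →ₗ⁅K⁆ E₂.T),
      E₁.γ.comp θ₁ = E.γ ∧ E₂.γ.comp θ₂ = E.γ := by
  obtain ⟨E, ι, hι⟩ := exists_lieHom_of_ker_le_center
    (lieFiberProduct.surjective_comp_fst E₁.surj E₂.surj)
    (lieFiberProduct.ker_comp_fst_le_center E₁.central E₂.central)
  refine ⟨E, (lieFiberProduct.fst _ _).comp ι, (lieFiberProduct.snd _ _).comp ι, hι, ?_⟩
  rw [lieFiberProduct.comp_fst_eq_comp_snd] at hι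
  exact hι

theorem IsMaximal.bijective_of_comp_eq {E E' : StemExtension K L} (hE : E.IsMaximal)
    [FiniteDimensional K E.γ.ker] {θ : E'.T →ₗ⁅K⁆ E.T} (hθ : E.γ.comp θ = E'.γ) :
    Bijective θ := by
  have hsurj : Surjective θ :=
    surjective_of_surjective_comp_of_ker_le E.central E.stem (hθ ▸ E'.surj)
  have hker : Module.rank K (E.γ.comp θ).ker ≤ Module.rank K E.γ.ker := hθ ▸ hE E'
  exact ⟨injective_of_surjective_of_rank_comap_le (f := (θ : E'.T →ₗ[K] E.T)) hsurj
    E.γ.ker.toSubmodule hker, hsurj⟩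

end StemExtension

theorem stmt_15_general (K : Type u) [Field K] (L : Type u) [LieRing L] [LieAlgebra K L]
    (E₁ E₂ : StemExtension K L) [FiniteDimensional K E₁.γ.ker]
    (hmax₁ : E₁.IsMaximal) (hmax₂ : E₂.IsMaximal) :
    ∃ e : E₁.T ≃ₗ⁅K⁆ E₂.T, E₂.γ.comp (e : E₁.T →ₗ⁅K⁆ E₂.T) = E₁.γ := by
  have : FiniteDimensional K E₂.γ.ker :=
    Module.rank_lt_aleph0_iff.1 ((hmax₁ E₂).trans_lt (Module.rank_lt_aleph0 K E₁.γ.ker))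
  obtain ⟨E, θ₁, θ₂, hθ₁, hθ₂⟩ := StemExtension.exists_common_lieHom E₁ E₂
  let e₁ : E.T ≃ₗ⁅K⁆ E₁.T := LieEquiv.ofBijective θ₁ (hmax₁.bijective_of_comp_eq hθ₁)
  let e₂ : E.T ≃ₗ⁅K⁆ E₂.T := LieEquiv.ofBijective θ₂ (hmax₂.bijective_of_comp_eq hθ₂)
  refine ⟨e₁.symm.trans e₂, LieHom.ext fun x => ?_⟩
  calc E₂.γ (θ₂ (e₁.symm x)) = E₁.γ (θ₁ (e₁.symm x)) := LieHom.congr_fun (hθ₂.trans hθ₁.symm) _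
    _ = E₁.γ x := congrArg E₁.γ (e₁.apply_symm_apply x)

/-- **Theorem 3.3, uniqueness of the cover, purely even case.**
Let `L` be a finite-dimensional Lie algebra over a field of characteristic
different from `2` and `3`.  The cover of `L` is unique up to Lie algebra
isomorphism: the middle terms of any two maximal stem extensions of `L` are
isomorphic as Lie algebras. -/
theorem stmt_15 (K : Type u) [Field K] (h2 : (2 : K) ≠ 0) (h3 : (3 : K) ≠ 0)
    (L : Type u) [LieRing L] [LieAlgebra K L] [FiniteDimensional K L]
    (E₁ E₂ : StemExtension K L)
    (hmax₁ : ∀ E' : StemExtension K L,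
      Module.rank K E'.γ.ker ≤ Module.rank K E₁.γ.ker)
    (hmax₂ : ∀ E' : StemExtension K L,
      Module.rank K E'.γ.ker ≤ Module.rank K E₂.γ.ker) :
    Nonempty (E₁.T ≃ₗ⁅K⁆ E₂.T) := by
  have := E₁.finiteDimensional_ker
  obtain ⟨e, -⟩ := stmt_15_general K L E₁ E₂ hmax₁ hmax₂
  exact ⟨e⟩
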